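/- Suppose f and |f| are both Henstock–Kurzweil integrable on [a,b]. Then f is Lebesgue integrable on [a,b] and the HK integral of f equals its Lebesgue integral. -/

import Mathlib

def IsTaggedPartition (a b : ℝ) (n : ℕ) (t x : ℕ → ℝ) : Prop :=
  t 0 = a ∧ t n = b ∧ (∀ j < n, t j < t (j + 1)) ∧
    ∀ j < n, x j ∈ Set.Icc (t j) (t (j + 1))

def IsFine (δ : ℝ → ℝ) (n : ℕ) (t x : ℕ → ℝ) : Prop :=
  ∀ j < n, t (j + 1) - t j < δ (x j)

def RiemannSum (g : ℝ → ℝ) (n : ℕ) (t x : ℕ → ℝ) : ℝ :=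
  ∑ j ∈ Finset.range n, g (x j) * (t (j + 1) - t j)

/-- `f` is Henstock–Kurzweil integrable on `[a,b]` with integral `α`. -/
def HKIntegral (a b : ℝ) (f : ℝ → ℝ) (α : ℝ) : Prop :=
  ∀ ε > 0, ∃ δ : ℝ → ℝ, (∀ y ∈ Set.Icc a b, 0 < δ y) ∧
    ∀ (n : ℕ) (t x : ℕ → ℝ), IsTaggedPartition a b n t x → IsFine δ n t x →
      |RiemannSum f n t x - α| < ε

/-! The HK integral `β` of `g` is approximated from above by the increments over `[a, b]` of major
functions `Φ`, as in the Perron integral, and likewise `-β` by those of major functions `Ψ` of `-g`.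
When `g ≥ 0`, both `Φ` and `Φ + Ψ` are nondecreasing, hence differentiable almost everywhere with
`∫ (Φ + Ψ)' ≤ (Φ + Ψ)(b) - (Φ + Ψ)(a)`, which is as small as we like. Since `-Ψ' ≤ g ≤ Φ'` almost
everywhere, `g` is squeezed between integrable functions that are arbitrarily close in mean, so it
is Lebesgue integrable; this applies to `|f|` and to `f + |f|`, hence `f` is integrable.

A Lebesgue integrable `f` has major functions with increment arbitrarily close to `∫ f`, by the
Vitali–Carathéodory theorem, and the increment of a major function is never below the HK integral
`α`. Hence `α ≤ ∫ f`, and the same for `-f` gives equality.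
-/

open MeasureTheory Filter Topology Set

theorem integrable_of_forall_exists_between {α : Type*} [MeasurableSpace α] {μ : Measure α}
    {g : α → ℝ} (h : ∀ ε > 0, ∃ l u : α → ℝ, Integrable l μ ∧ Integrable u μ ∧
      l ≤ᵐ[μ] g ∧ g ≤ᵐ[μ] u ∧ ∫ x, (u - l) x ∂μ ≤ ε) :
    Integrable g μ := by
  choose l u hl hu hlg hgu hint using fun k : ℕ => h (1 / ((k : ℝ) + 1)) Nat.one_div_pos_of_nat
  have hnorm : Tendsto (fun k => eLpNorm (u k - l k - 0) 1 μ) atTop (𝓝 0) := by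
    have hlim := ENNReal.tendsto_ofReal (tendsto_one_div_add_atTop_nhds_zero_nat (𝕜 := ℝ))
    rw [ENNReal.ofReal_zero] at hlim
    refine tendsto_of_tendsto_of_tendsto_of_le_of_le tendsto_const_nhds hlim
      (fun _ => zero_le) fun k => ?_
    have hnonneg : 0 ≤ᵐ[μ] u k - l k := by
      filter_upwards [hlg k, hgu k] with x hlx hux using sub_nonneg.2 (hlx.trans hux)
    rw [sub_zero, eLpNorm_one_eq_lintegral_enorm, lintegral_enorm_of_ae_nonneg hnonneg,
      ← ofReal_integral_eq_lintegral_ofReal ((hu k).sub (hl k)) hnonneg]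
    exact ENNReal.ofReal_le_ofReal (hint k)
  obtain ⟨ns, -, hns⟩ := (tendstoInMeasure_of_tendsto_eLpNorm one_ne_zero
    (fun k => ((hu k).sub (hl k)).aestronglyMeasurable) aestronglyMeasurable_zero
    hnorm).exists_seq_tendsto_ae
  have hg : AEMeasurable g μ := by
    refine aemeasurable_of_tendsto_metrizable_ae atTop (fun k => (hu (ns k)).aemeasurable) ?_
    filter_upwards [hns, ae_all_iff.2 hlg, ae_all_iff.2 hgu] with x hx hlx hux
    rw [tendsto_iff_dist_tendsto_zero]
    refine squeeze_zero (fun _ => dist_nonneg) (fun k => ?_) hx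
    rw [Real.dist_eq, abs_of_nonneg (sub_nonneg.2 (hux _))]
    exact sub_le_sub_left (hlx _) _
  exact integrable_of_le_of_le hg.aestronglyMeasurable (hlg 0) (hgu 0) (hl 0) (hu 0)

section MonotoneOn

variable {Φ : ℝ → ℝ} {a b : ℝ}

theorem ae_restrict_differentiableAt_of_monotoneOn {U : Set ℝ} (hU : IsOpen U)
    (hΦ : MonotoneOn Φ U) : ∀ᵐ x ∂volume.restrict U, DifferentiableAt ℝ Φ x := by
  filter_upwards [hΦ.ae_differentiableWithinAt hU.measurableSet,
    ae_restrict_mem hU.measurableSet] with x hd hx using hd.differentiableAt (hU.mem_nhds hx)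

theorem integrableOn_deriv_of_monotoneOn (hab : a ≤ b) (hΦ : MonotoneOn Φ (Icc a b)) :
    IntegrableOn (deriv Φ) (Ioo a b) := by
  rw [← uIcc_of_le hab] at hΦ
  exact (intervalIntegrable_iff_integrableOn_Ioo_of_le hab).1 hΦ.intervalIntegrable_deriv

theorem setIntegral_deriv_le_of_monotoneOn (hab : a ≤ b) (hΦ : MonotoneOn Φ (Icc a b)) :
    ∫ x in Ioo a b, deriv Φ x ≤ Φ b - Φ a := by
  have hle : Φ a ≤ Φ b := hΦ (left_mem_Icc.2 hab) (right_mem_Icc.2 hab) hab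
  rw [← uIcc_of_le hab] at hΦ
  have hmem := hΦ.intervalIntegral_deriv_mem_uIcc
  rw [uIcc_of_le (sub_nonneg.2 hle), intervalIntegral.integral_of_le hab,
    integral_Ioc_eq_integral_Ioo] at hmem
  exact hmem.2

end MonotoneOn

section Gauge

variable {f δ δ' : ℝ → ℝ} {u v w s s' : ℝ}

/-- `FineSum f δ u v s` says that `s` is the Riemann sum of `f` over some `δ`-fine tagged partition
of `[u, v]`. Building partitions cell by cell makes concatenation an induction, with no reindexing
of the sequences in `IsTaggedPartition`. -/
inductive FineSum (f δ : ℝ → ℝ) (u : ℝ) : ℝ → ℝ → Prop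
  | refl : FineSum f δ u u 0
  | snoc {v w s : ℝ} (y : ℝ) : FineSum f δ u v s → v < w → y ∈ Icc v w → w - v < δ y →
      FineSum f δ u w (s + f y * (w - v))

namespace FineSum

theorem le (h : FineSum f δ u v s) : u ≤ v := by
  induction h with
  | refl => exact le_rfl
  | snoc _ _ hvw _ _ ih => exact ih.trans hvw.le

theorem trans (h : FineSum f δ u v s) (h' : FineSum f δ v w s') : FineSum f δ u w (s + s') := by
  induction h' with
  | refl => simpa using h
  | snoc y _ hvw hy hfine ih =>
    rw [← add_assoc]
    exact ih.snoc y hvw hy hfine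

theorem mono (hδ : ∀ y, δ y ≤ δ' y) (h : FineSum f δ u v s) : FineSum f δ' u v s := by
  induction h with
  | refl => exact refl
  | snoc y _ hvw hy hfine ih => exact ih.snoc y hvw hy (hfine.trans_le (hδ y))

theorem nonneg (h : FineSum f δ u v s) (hf : ∀ y ∈ Icc u v, 0 ≤ f y) : 0 ≤ s := by
  induction h with
  | refl => exact le_rfl
  | snoc y huv hvw hy _ ih =>
    exact add_nonneg (ih fun z hz => hf z ⟨hz.1, hz.2.trans hvw.le⟩)
      (mul_nonneg (hf y ⟨huv.le.trans hy.1, hy.2⟩) (sub_nonneg.2 hvw.le))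

theorem exists_isTaggedPartition (h : FineSum f δ u v s) :
    ∃ n t x, IsTaggedPartition u v n t x ∧ IsFine δ n t x ∧ RiemannSum f n t x = s := by
  induction h with
  | refl =>
    exact ⟨0, fun _ => u, fun _ => u, by simp [IsTaggedPartition], by simp [IsFine],
      by simp [RiemannSum]⟩
  | @snoc v w s y _ hvw hy hfine ih =>
    obtain ⟨n, t, x, ⟨h0, hn, hlt, hx⟩, htx, hs⟩ := ih
    set t' := Function.update t (n + 1) w
    set x' := Function.update x n y
    have ht_left : ∀ j ≤ n, t' j = t j := fun j hj => Function.update_of_ne (by omega) _ _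
    have ht_last : t' (n + 1) = w := Function.update_self ..
    have hx_left : ∀ j < n, x' j = x j := fun j hj => Function.update_of_ne hj.ne _ _
    have hx_last : x' n = y := Function.update_self ..
    have forall_cell {p : ℝ → ℝ → ℝ → Prop} (hold : ∀ j < n, p (t j) (t (j + 1)) (x j))
        (hnew : p v w y) : ∀ j < n + 1, p (t' j) (t' (j + 1)) (x' j) := by
      refine Nat.forall_lt_succ_right.2 ⟨fun j hj => ?_, ?_⟩
      · rw [ht_left j hj.le, ht_left (j + 1) hj, hx_left j hj]
        exact hold j hj
      · rwa [ht_left n le_rfl, hn, ht_last, hx_last]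
    refine ⟨n + 1, t', x', ⟨(ht_left 0 n.zero_le).trans h0, ht_last,
      forall_cell (p := fun v w _ => v < w) hlt hvw,
      forall_cell (p := fun v w y => y ∈ Icc v w) hx hy⟩,
      forall_cell (p := fun v w y => w - v < δ y) htx hfine, ?_⟩
    rw [RiemannSum, Finset.sum_range_succ, ht_left n le_rfl, hn, ht_last, hx_last, ← hs]
    congr 1
    refine Finset.sum_congr rfl fun j hj => ?_
    have hj := Finset.mem_range.1 hj
    rw [ht_left j hj.le, ht_left (j + 1) hj, hx_left j hj]

/-- **Cousin's lemma**. -/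
theorem exists_of_gauge_pos (huv : u ≤ v) (hδ : ∀ y ∈ Icc u v, 0 < δ y) :
    ∃ s, FineSum f δ u v s := by
  set S : Set ℝ := {x | x ≤ v ∧ ∃ s, FineSum f δ u x s}
  have hu : u ∈ S := ⟨huv, 0, refl⟩
  have hS : BddAbove S := ⟨v, fun x hx => hx.1⟩
  set c := sSup S
  have hcv : c ≤ v := csSup_le ⟨u, hu⟩ fun x hx => hx.1
  have hδc : 0 < δ c := hδ c ⟨le_csSup hS hu, hcv⟩
  obtain ⟨s, hs⟩ : ∃ s, FineSum f δ u c s := by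
    obtain ⟨x, hxS, hx⟩ := exists_lt_of_lt_csSup ⟨u, hu⟩ (sub_lt_self c hδc)
    obtain ⟨s, hs⟩ := hxS.2
    rcases (le_csSup hS hxS).eq_or_lt with rfl | hxc
    · exact ⟨s, hs⟩
    · exact ⟨_, hs.snoc c hxc ⟨hxc.le, le_rfl⟩ (by linarith)⟩
  rcases hcv.eq_or_lt with hcv | hcv
  · exact ⟨s, hcv ▸ hs⟩
  · obtain ⟨w, hcw, hw⟩ := exists_between (lt_min hcv (lt_add_of_pos_right c hδc))
    obtain ⟨hwv, hwδ⟩ := lt_min_iff.1 hw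
    have hwS : w ∈ S := ⟨hwv.le, _, hs.snoc c hcw ⟨le_rfl, hcw.le⟩ (by linarith)⟩
    exact absurd (le_csSup hS hwS) hcw.not_ge

end FineSum

end Gauge

section HenstockKurzweil

variable {a b α β : ℝ} {f g : ℝ → ℝ}

namespace HKIntegral

theorem add (hf : HKIntegral a b f α) (hg : HKIntegral a b g β) :
    HKIntegral a b (f + g) (α + β) := by
  intro ε hε
  obtain ⟨δ, hδ, hδf⟩ := hf (ε / 2) (half_pos hε)
  obtain ⟨δ', hδ', hδg⟩ := hg (ε / 2) (half_pos hε)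
  refine ⟨fun y => min (δ y) (δ' y), fun y hy => lt_min (hδ y hy) (hδ' y hy), ?_⟩
  intro n t x hp hfine
  have hsum : RiemannSum (f + g) n t x = RiemannSum f n t x + RiemannSum g n t x := by
    simp only [RiemannSum, Pi.add_apply, add_mul, Finset.sum_add_distrib]
  calc |RiemannSum (f + g) n t x - (α + β)|
      = |(RiemannSum f n t x - α) + (RiemannSum g n t x - β)| := by rw [hsum, add_sub_add_comm]
    _ ≤ |RiemannSum f n t x - α| + |RiemannSum g n t x - β| := abs_add_le _ _
    _ < ε / 2 + ε / 2 := add_lt_add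
        (hδf n t x hp fun j hj => (hfine j hj).trans_le (min_le_left _ _))
        (hδg n t x hp fun j hj => (hfine j hj).trans_le (min_le_right _ _))
    _ = ε := add_halves ε

theorem neg (hf : HKIntegral a b f α) : HKIntegral a b (-f) (-α) := by
  intro ε hε
  obtain ⟨δ, hδ, hδf⟩ := hf ε hε
  refine ⟨δ, hδ, fun n t x hp hfine => ?_⟩
  have hsum : RiemannSum (-f) n t x = -RiemannSum f n t x := by
    simp only [RiemannSum, Pi.neg_apply, neg_mul, Finset.sum_neg_distrib]
  rw [hsum, ← neg_sub', abs_neg]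
  exact hδf n t x hp hfine

theorem exists_gauge_fineSum (hf : HKIntegral a b f α) {ε : ℝ} (hε : 0 < ε) :
    ∃ δ : ℝ → ℝ, (∀ y ∈ Icc a b, 0 < δ y) ∧ ∀ s, FineSum f δ a b s → |s - α| < ε := by
  obtain ⟨δ, hδ, hδf⟩ := hf ε hε
  refine ⟨δ, hδ, fun s hs => ?_⟩
  obtain ⟨n, t, x, hp, hfine, rfl⟩ := hs.exists_isTaggedPartition
  exact hδf n t x hp hfine

end HKIntegral

/-- `Φ` is a major function of `f` on `[a, b]`, as in the Perron integral: its increment over every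
sufficiently short interval around a point `y` dominates `f y` times the length of the interval.
This replaces the usual condition that the lower derivative of `Φ` be at least `f`. -/
def IsMajorFunction (a b : ℝ) (f Φ : ℝ → ℝ) : Prop :=
  ∀ y ∈ Icc a b, ∃ δ > 0, ∀ u ∈ Icc a y, ∀ v ∈ Icc y b, v - u < δ → f y * (v - u) ≤ Φ v - Φ u

namespace IsMajorFunction

variable {Φ Ψ : ℝ → ℝ}

theorem add (hΦ : IsMajorFunction a b f Φ) (hΨ : IsMajorFunction a b g Ψ) :
    IsMajorFunction a b (f + g) (Φ + Ψ) := by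
  intro y hy
  obtain ⟨δ, hδ, hf⟩ := hΦ y hy
  obtain ⟨δ', hδ', hg⟩ := hΨ y hy
  refine ⟨min δ δ', lt_min hδ hδ', fun u hu v hv huv => ?_⟩
  obtain ⟨h, h'⟩ := lt_min_iff.1 huv
  rw [Pi.add_apply, Pi.add_apply, Pi.add_apply, add_mul, add_sub_add_comm]
  exact add_le_add (hf u hu v hv h) (hg u hu v hv h')

theorem exists_gauge_fineSum_le (hΦ : IsMajorFunction a b f Φ) :
    ∃ δ : ℝ → ℝ, (∀ y ∈ Icc a b, 0 < δ y) ∧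
      ∀ u v s, a ≤ u → v ≤ b → FineSum f δ u v s → s ≤ Φ v - Φ u := by
  choose! δ hδ hcell using hΦ
  refine ⟨δ, hδ, fun u v s hu hv h => ?_⟩
  induction h with
  | refl => simp
  | @snoc v w s y huv hvw hy hfine ih =>
    have hav := hu.trans huv.le
    have hlast := hcell y ⟨hav.trans hy.1, hy.2.trans hv⟩ v ⟨hav, hy.1⟩ w ⟨hy.2, hv⟩ hfine
    linarith [ih (hvw.le.trans hv)]

theorem monotoneOn (hΦ : IsMajorFunction a b f Φ) (hf : ∀ x ∈ Icc a b, 0 ≤ f x) :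
    MonotoneOn Φ (Icc a b) := by
  intro u hu v hv huv
  obtain ⟨δ, hδ, hle⟩ := hΦ.exists_gauge_fineSum_le
  have hsub : Icc u v ⊆ Icc a b := Icc_subset_Icc hu.1 hv.2
  obtain ⟨s, hs⟩ := FineSum.exists_of_gauge_pos huv fun y hy => hδ y (hsub hy)
  exact sub_nonneg.1 <|
    (hs.nonneg fun y hy => hf y (hsub hy)).trans (hle u v s hu.1 hv.2 hs)

theorem le_deriv (hΦ : IsMajorFunction a b f Φ) {x : ℝ} (hx : x ∈ Ico a b)
    (hd : DifferentiableAt ℝ Φ x) : f x ≤ deriv Φ x := by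
  obtain ⟨δ, hδ, hcell⟩ := hΦ x ⟨hx.1, hx.2.le⟩
  refine ge_of_tendsto (hd.hasDerivAt.tendsto_slope.mono_left (nhdsGT_le_nhdsNE x)) ?_
  filter_upwards [Ioo_mem_nhdsGT (lt_min hx.2 (lt_add_of_pos_right x hδ))] with v hv
  obtain ⟨hvb, hvδ⟩ := lt_min_iff.1 hv.2
  rw [slope_def_field, le_div_iff₀ (sub_pos.2 hv.1)]
  exact hcell x ⟨hx.1, le_rfl⟩ v ⟨hv.1.le, hvb.le⟩ (by linarith)

end IsMajorFunction

/-- Take `Φ x` to be the supremum of the fine sums over `[a, x]`: appending a cell to a partition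
gives the required lower bound for the increment of `Φ`. -/
theorem HKIntegral.exists_isMajorFunction (hf : HKIntegral a b f α) (hab : a ≤ b) {ε : ℝ}
    (hε : 0 < ε) : ∃ Φ, IsMajorFunction a b f Φ ∧ Φ b - Φ a ≤ α + ε := by
  obtain ⟨δ, hδ, hs⟩ := hf.exists_gauge_fineSum hε
  have hle (s) (h : FineSum f δ a b s) : s ≤ α + ε := by linarith [(abs_lt.1 (hs s h)).2]
  have hne {x} (hx : x ∈ Icc a b) : {s | FineSum f δ a x s}.Nonempty :=
    FineSum.exists_of_gauge_pos hx.1 fun y hy => hδ y ⟨hy.1, hy.2.trans hx.2⟩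
  have hbdd {x} (hx : x ∈ Icc a b) : BddAbove {s | FineSum f δ a x s} := by
    obtain ⟨s', hs'⟩ := FineSum.exists_of_gauge_pos (f := f) hx.2
      fun y hy => hδ y ⟨hx.1.trans hy.1, hy.2⟩
    exact ⟨α + ε - s', fun s h => le_sub_iff_add_le.2 (hle _ (h.trans hs'))⟩
  refine ⟨fun x => sSup {s | FineSum f δ a x s}, fun y hy => ⟨δ y, hδ y hy, ?_⟩, ?_⟩
  · intro u hu v hv huv
    rcases (hu.2.trans hv.1).eq_or_lt with rfl | hlt
    · simp
    · rw [le_sub_iff_add_le']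
      refine le_sub_iff_add_le.1 (csSup_le (hne ⟨hu.1, hu.2.trans hy.2⟩) fun s h => ?_)
      exact le_sub_iff_add_le.2
        (le_csSup (hbdd ⟨hy.1.trans hv.1, hv.2⟩) (h.snoc y hlt ⟨hu.2, hv.1⟩ huv))
  · have ha : 0 ≤ sSup {s | FineSum f δ a a s} :=
      le_csSup (hbdd (left_mem_Icc.2 hab)) FineSum.refl
    have hb : sSup {s | FineSum f δ a b s} ≤ α + ε := csSup_le (hne (right_mem_Icc.2 hab)) hle
    exact (sub_le_self _ ha).trans hb

theorem HKIntegral.le_sub_of_isMajorFunction (hf : HKIntegral a b f α) (hab : a ≤ b)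
    {Φ : ℝ → ℝ} (hΦ : IsMajorFunction a b f Φ) : α ≤ Φ b - Φ a := by
  refine le_of_forall_pos_le_add fun ε hε => ?_
  obtain ⟨δ, hδ, hs⟩ := hf.exists_gauge_fineSum hε
  obtain ⟨δ', hδ', hle⟩ := hΦ.exists_gauge_fineSum_le
  obtain ⟨s, h⟩ := FineSum.exists_of_gauge_pos (f := f) (δ := fun y => min (δ y) (δ' y)) hab
    fun y hy => lt_min (hδ y hy) (hδ' y hy)
  have hclose := hs s (h.mono fun _ => min_le_left _ _)
  have hmajor := hle a b s le_rfl le_rfl (h.mono fun _ => min_le_right _ _)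
  linarith [(abs_lt.1 hclose).1]

theorem HKIntegral.integrableOn_of_nonneg (hg : HKIntegral a b g β) (hab : a ≤ b)
    (hg0 : ∀ x ∈ Icc a b, 0 ≤ g x) : IntegrableOn g (Icc a b) := by
  rw [integrableOn_Icc_iff_integrableOn_Ioo]
  refine integrable_of_forall_exists_between fun ε hε => ?_
  obtain ⟨Φ, hΦ, hΦβ⟩ := hg.exists_isMajorFunction hab (half_pos hε)
  obtain ⟨Ψ, hΨ, hΨβ⟩ := hg.neg.exists_isMajorFunction hab (half_pos hε)
  have hmono : MonotoneOn Φ (Icc a b) := hΦ.monotoneOn hg0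
  have hsum : MonotoneOn (Φ + Ψ) (Icc a b) := (hΦ.add hΨ).monotoneOn (by simp)
  have hint := integrableOn_deriv_of_monotoneOn hab hmono
  have hint_sum := integrableOn_deriv_of_monotoneOn hab hsum
  -- Almost everywhere `deriv Φ - deriv (Φ + Ψ) = -deriv Ψ`, where `-Ψ` is a minor function of `g`.
  refine ⟨deriv Φ - deriv (Φ + Ψ), deriv Φ, hint.sub hint_sum, hint, ?_, ?_, ?_⟩
  · filter_upwards [ae_restrict_mem measurableSet_Ioo,
      ae_restrict_differentiableAt_of_monotoneOn isOpen_Ioo (hmono.mono Ioo_subset_Icc_self),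
      ae_restrict_differentiableAt_of_monotoneOn isOpen_Ioo (hsum.mono Ioo_subset_Icc_self)]
      with x hx hΦx hsumx
    have hΨx : DifferentiableAt ℝ Ψ x := by simpa using hsumx.sub hΦx
    have hle : -g x ≤ deriv Ψ x := hΨ.le_deriv (Ioo_subset_Ico_self hx) hΨx
    rw [Pi.sub_apply, deriv_add hΦx hΨx]
    linarith
  · filter_upwards [ae_restrict_mem measurableSet_Ioo,
      ae_restrict_differentiableAt_of_monotoneOn isOpen_Ioo (hmono.mono Ioo_subset_Icc_self)]
      with x hx hΦx using hΦ.le_deriv (Ioo_subset_Ico_self hx) hΦx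
  · rw [sub_sub_cancel]
    refine (setIntegral_deriv_le_of_monotoneOn hab hsum).trans ?_
    simp only [Pi.add_apply]
    linarith

/-- The Vitali–Carathéodory theorem gives a lower semicontinuous function strictly above `f` with
nearly the same integral; its primitive is `Φ`. -/
theorem exists_isMajorFunction_of_integrableOn (hab : a ≤ b) (hf : IntegrableOn f (Icc a b))
    {ε : ℝ} (hε : 0 < ε) :
    ∃ Φ, IsMajorFunction a b f Φ ∧ Φ b - Φ a ≤ (∫ x in Icc a b, f x) + ε := by
  have : (volume.restrict (Icc a b)).WeaklyRegular :=
    .restrict_of_measure_ne_top (by simp)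
  obtain ⟨G, hfG, hlsc, hGi, hGtop, hGint⟩ :=
    exists_lt_lowerSemicontinuous_integral_lt (μ := volume.restrict (Icc a b)) f hf hε
  have hInt {u v} (hu : a ≤ u) (huv : u ≤ v) (hv : v ≤ b) :
      IntervalIntegrable (fun x => (G x).toReal) volume u v :=
    (intervalIntegrable_iff_integrableOn_Icc_of_le huv).2
      (IntegrableOn.mono_set hGi (Icc_subset_Icc hu hv))
  refine ⟨fun x => ∫ z in a..x, (G z).toReal, fun y hy => ?_, ?_⟩
  · obtain ⟨r, hr, hball⟩ := Metric.eventually_nhds_iff.1 (hlsc y _ (hfG y))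
    refine ⟨r, hr, fun u hu v hv huv => ?_⟩
    have huv' := hu.2.trans hv.1
    have hub := hu.2.trans hy.2
    rw [intervalIntegral.integral_interval_sub_left (hInt le_rfl (hu.1.trans huv') hv.2)
      (hInt le_rfl hu.1 hub)]
    calc f y * (v - u) = ∫ _ in u..v, f y := by
          rw [intervalIntegral.integral_const, smul_eq_mul, mul_comm]
      _ ≤ ∫ z in u..v, (G z).toReal := by
          refine intervalIntegral.integral_mono_ae_restrict huv' (by simp)
            (hInt hu.1 huv' hv.2) ?_
          filter_upwards [ae_restrict_of_ae_restrict_of_subset (Icc_subset_Icc hu.1 hv.2) hGtop,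
            ae_restrict_mem measurableSet_Icc] with z hztop hz
          have hdist : dist z y < r :=
            (Real.dist_le_of_mem_Icc hz ⟨hu.2, hv.1⟩).trans_lt huv
          exact EReal.toReal_le_toReal (hball hdist).le (EReal.coe_ne_bot _) hztop.ne
  · simp only [intervalIntegral.integral_same, sub_zero]
    rw [intervalIntegral.integral_of_le hab, ← integral_Icc_eq_integral_Ioc]
    exact hGint.le

theorem HKIntegral.le_setIntegral (hf : HKIntegral a b f α) (hab : a ≤ b)
    (hi : IntegrableOn f (Icc a b)) : α ≤ ∫ x in Icc a b, f x := by
  refine le_of_forall_pos_le_add fun ε hε => ?_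
  obtain ⟨Φ, hΦ, hΦint⟩ := exists_isMajorFunction_of_integrableOn hab hi hε
  exact (hf.le_sub_of_isMajorFunction hab hΦ).trans hΦint

theorem HKIntegral.setIntegral_eq (hf : HKIntegral a b f α) (hab : a ≤ b)
    (hi : IntegrableOn f (Icc a b)) : ∫ x in Icc a b, f x = α := by
  refine le_antisymm ?_ (hf.le_setIntegral hab hi)
  have hneg := hf.neg.le_setIntegral hab hi.neg
  simp only [Pi.neg_apply, integral_neg] at hneg
  exact neg_le_neg_iff.1 hneg

end HenstockKurzweil

theorem lebesgue_integrable_of_hk_abs_general (a b : ℝ) (hab : a ≤ b) (f g : ℝ → ℝ) (α β : ℝ)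
    (hf : HKIntegral a b f α) (hg : HKIntegral a b g β) (hg0 : ∀ x ∈ Icc a b, 0 ≤ g x)
    (hfg : ∀ x ∈ Icc a b, -g x ≤ f x) :
    IntegrableOn f (Icc a b) ∧ ∫ x in Icc a b, f x = α := by
  have hadd : IntegrableOn (f + g) (Icc a b) :=
    (hf.add hg).integrableOn_of_nonneg hab fun x hx => neg_le_iff_add_nonneg.1 (hfg x hx)
  have hi : IntegrableOn f (Icc a b) := by
    simpa using hadd.sub (hg.integrableOn_of_nonneg hab hg0)
  exact ⟨hi, hf.setIntegral_eq hab hi⟩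

/-- If `f` and `|f|` are both HK integrable on `[a,b]`, then `f` is Lebesgue
integrable on `[a,b]` and the HK integral equals the Lebesgue integral. -/
theorem lebesgue_integrable_of_hk_abs (a b : ℝ) (hab : a ≤ b) (f : ℝ → ℝ) (α β : ℝ)
    (hf : HKIntegral a b f α) (habs : HKIntegral a b (fun x => |f x|) β) :
    MeasureTheory.IntegrableOn f (Set.Icc a b) MeasureTheory.volume ∧
      ∫ x in Set.Icc a b, f x = α := by
  exact lebesgue_integrable_of_hk_abs_general a b hab f _ α β hf habs
    (fun x _ => abs_nonneg (f x)) fun x _ => neg_abs_le (f x)
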